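/- With χ̃ as above (χ̃(x) = ∫ 𝟙_{Ω̃_ε}(x - ⟨x⟩ε u) ρ(u) du, ρ smooth supported in B(0,ε) with ∫ρ=1), for every multi-index k there exists a constant C(ε, k) such that |D^k χ̃(x)| ≤ C(ε, k) ⟨x⟩^{-|k|} for all x ∈ ℝ³. -/

import Mathlib

open MeasureTheory

noncomputable section

abbrev E3 := EuclideanSpace ℝ (Fin 3)

/-- The Japanese bracket `⟨x⟩ = (1 + |x|²)^{1/2}`. -/
noncomputable def jap (x : E3) : ℝ := Real.sqrt (1 + ‖x‖ ^ 2)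

/-- The rescaled mollification of the indicator of a set `S`:
`χ̃(x) = ∫ 𝟙_S(x - ⟨x⟩ε u) ρ(u) du`. -/
noncomputable def wCutoff (S : Set E3) (ε : ℝ) (ρ : E3 → ℝ) (x : E3) : ℝ :=
  ∫ u : E3, Set.indicator S (fun _ => (1 : ℝ)) (x - (jap x * ε) • u) * ρ u

/-!
Since `⟨x⟩ = |(1, x)|`, the function `χ̃` is the restriction to an affine slice `p = c + L x` of
`M_f(p, x) = ∫ f(x - |p| u) ρ(u) du`, where `f = 𝟙_S`. For `p ≠ 0` this is the convolution of `f`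
with the kernel `ρ_{|p|}(v)`, which is smooth in `(p, v)`. So all derivatives fall on the kernel,
and on the compact sphere `|p| = 1` they are bounded uniformly over all measurable `|f| ≤ 1`. That
class is invariant under dilations and `M_f(r p, r x) = M_{f(r ·)}(p, x)`, so scaling a point to
`|p| = 1` turns the uniform bound there into the decay `|p|⁻ᵏ` everywhere.
-/

open Metric Module Set
open ContinuousLinearMap (lsmul)
open scoped Convolution ContDiff Pointwise Topology

section IteratedFDeriv

variable {V W F : Type*} [NormedAddCommGroup V] [NormedSpace ℝ V] [NormedAddCommGroup W]
  [NormedSpace ℝ W] [NormedAddCommGroup F] [NormedSpace ℝ F]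

theorem iteratedFDeriv_comp_clm {k : ℕ} {h : W → F} (A : V →L[ℝ] W) {x : V}
    (hh : ContDiffAt ℝ k h (A x)) :
    iteratedFDeriv ℝ k (fun y ↦ h (A y)) x =
      (iteratedFDeriv ℝ k h (A x)).compContinuousLinearMap fun _ ↦ A := by
  obtain ⟨u, hu, hhu⟩ := hh.contDiffOn le_rfl (by simp)
  obtain ⟨s, hsu, hs, hxs⟩ := _root_.mem_nhds_iff.1 hu
  have hs' : IsOpen (A ⁻¹' s) := hs.preimage A.continuous
  rw [← iteratedFDerivWithin_of_isOpen k hs' hxs, ← iteratedFDerivWithin_of_isOpen k hs hxs]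
  exact A.iteratedFDerivWithin_comp_right (hhu.mono hsu) hs.uniqueDiffOn hs'.uniqueDiffOn hxs le_rfl

theorem norm_iteratedFDeriv_comp_clm_le {k : ℕ} {h : W → F} (A : V →L[ℝ] W) {x : V}
    (hh : ContDiffAt ℝ k h (A x)) :
    ‖iteratedFDeriv ℝ k (fun y ↦ h (A y)) x‖ ≤ ‖iteratedFDeriv ℝ k h (A x)‖ * ‖A‖ ^ k := by
  rw [iteratedFDeriv_comp_clm A hh]
  simpa using (iteratedFDeriv ℝ k h (A x)).norm_compContinuousLinearMap_le fun _ ↦ A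

theorem norm_iteratedFDeriv_comp_const_add_clm_le {k : ℕ} {h : W → F} (c : W) (A : V →L[ℝ] W)
    {x : V} (hh : ContDiffAt ℝ k h (c + A x)) :
    ‖iteratedFDeriv ℝ k (fun y ↦ h (c + A y)) x‖ ≤
      ‖iteratedFDeriv ℝ k h (c + A x)‖ * ‖A‖ ^ k := by
  have hh' : ContDiffAt ℝ k (fun w ↦ h (c + w)) (A x) := by fun_prop
  simpa only [iteratedFDeriv_comp_add_left] using norm_iteratedFDeriv_comp_clm_le A hh'

theorem iteratedFDeriv_eq_zero_of_forall_notMem {g : V → W → F} {s : Set V} {K : Set W}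
    (hs : IsOpen s) (hK : IsClosed K) (hgs : ∀ p x, p ∈ s → x ∉ K → g p x = 0) (k : ℕ)
    {p : V} {x : W} (hp : p ∈ s) (hx : x ∉ K) : iteratedFDeriv ℝ k ↿g (p, x) = 0 := by
  have hzero : ↿g =ᶠ[𝓝 (p, x)] 0 := by
    filter_upwards [(hs.prod hK.isOpen_compl).mem_nhds ⟨hp, hx⟩] with q hq
    exact hgs q.1 q.2 hq.1 hq.2
  simpa using (hzero.iteratedFDeriv ℝ k).eq_of_nhds

end IteratedFDeriv

theorem integral_linearIsometryEquiv_comp {X V W : Type*} [MeasurableSpace X] {μ : Measure X}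
    [NormedAddCommGroup V] [NormedSpace ℝ V] [NormedAddCommGroup W] [NormedSpace ℝ W]
    (e : V ≃ₗᵢ[ℝ] W) (φ : X → V) : ∫ t, e (φ t) ∂μ = e (∫ t, φ t ∂μ) :=
  e.toContinuousLinearEquiv.integral_comp_comm φ

theorem locallyIntegrable_of_norm_le_one {X : Type*} [TopologicalSpace X] [MeasurableSpace X]
    {μ : Measure X} [IsLocallyFiniteMeasure μ] {f : X → ℝ} (hf : Measurable f)
    (hf1 : ∀ x, ‖f x‖ ≤ 1) : LocallyIntegrable f μ :=
  (locallyIntegrable_const (1 : ℝ)).mono hf.aestronglyMeasurable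
    (.of_forall fun x ↦ by simpa using hf1 x)

theorem norm_convolution_le {G F : Type*} [NormedAddCommGroup G] [MeasurableSpace G]
    [BorelSpace G] [NormedAddCommGroup F] [NormedSpace ℝ F] {μ : Measure G}
    [IsFiniteMeasureOnCompacts μ] [μ.IsAddLeftInvariant] [μ.IsNegInvariant] {f : G → ℝ} {g : G → F}
    {K : Set G} {C : ℝ} (hK : IsCompact K) (hf : ∀ x, ‖f x‖ ≤ 1) (hg : ∀ x ∈ K, ‖g x‖ ≤ C)
    (hgK : ∀ x ∉ K, g x = 0) (x : G) :
    ‖(f ⋆[lsmul ℝ ℝ, μ] g) x‖ ≤ C * μ.real K := by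
  rw [convolution_eq_swap, ← setIntegral_eq_integral_of_forall_compl_eq_zero (s := K)
    fun y hy ↦ by simp [hgK y hy]]
  refine norm_setIntegral_le_of_norm_le_const hK.measure_lt_top fun y hy ↦ ?_
  rw [ContinuousLinearMap.lsmul_apply, norm_smul]
  exact (mul_le_of_le_one_left (norm_nonneg _) (hf _)).trans (hg y hy)

section Convolution

variable {P G F : Type*} [NormedAddCommGroup P] [NormedSpace ℝ P] [NormedAddCommGroup G]
  [NormedSpace ℝ G] [MeasurableSpace G] [BorelSpace G] [NormedAddCommGroup F] [NormedSpace ℝ F]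
  {μ : Measure G} {f : G → ℝ}

theorem iteratedFDeriv_convolution_right_with_param {g : P → G → F} {s : Set P} {K : Set G}
    (hs : IsOpen s) (hK : IsCompact K) (hgs : ∀ p x, p ∈ s → x ∉ K → g p x = 0)
    (hf : LocallyIntegrable f μ) (hg : ContDiffOn ℝ ∞ ↿g (s ×ˢ univ)) (k : ℕ) {q : P × G}
    (hq : q.1 ∈ s) :
    iteratedFDeriv ℝ k (fun q : P × G ↦ (f ⋆[lsmul ℝ ℝ, μ] g q.1) q.2) q =
      (f ⋆[lsmul ℝ ℝ, μ] fun x ↦ iteratedFDeriv ℝ k ↿g (q.1, x)) q.2 := by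
  induction k generalizing q with
  | zero =>
    simp only [iteratedFDeriv_zero_eq_comp, Function.comp_apply, convolution,
      ContinuousLinearMap.lsmul_apply, ← map_smul]
    exact (integral_linearIsometryEquiv_comp
      (continuousMultilinearCurryFin0 ℝ (P × G) F).symm _).symm
  | succ k ih =>
    set g' : P → G → (P × G) [×k]→L[ℝ] F := fun p x ↦ iteratedFDeriv ℝ k ↿g (p, x)
    have hopen : IsOpen (s ×ˢ (univ : Set G)) := hs.prod isOpen_univ
    have hg' : ContDiffOn ℝ 1 ↿g' (s ×ˢ univ) := by
      refine ContDiffOn.congr (fun q hq ↦ ContDiffWithinAt.iteratedFDerivWithin_right (hg q hq)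
        hopen.uniqueDiffOn (i := k) (mod_cast le_top) hq) fun q hq ↦ ?_
      exact (iteratedFDerivWithin_of_isOpen k hopen hq).symm
    have hderiv := hasFDerivAt_convolution_right_with_param (lsmul ℝ ℝ) hs hK
      (fun p x hp hx ↦ iteratedFDeriv_eq_zero_of_forall_notMem hs hK.isClosed hgs k hp hx)
      hf hg' q hq
    have hev : iteratedFDeriv ℝ k (fun q : P × G ↦ (f ⋆[lsmul ℝ ℝ, μ] g q.1) q.2) =ᶠ[𝓝 q]
        fun q ↦ (f ⋆[lsmul ℝ ℝ, μ] g' q.1) q.2 := by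
      filter_upwards [hopen.mem_nhds ⟨hq, mem_univ _⟩] with q' hq'
      exact ih hq'.1
    set e := (continuousMultilinearCurryLeftEquiv ℝ (fun _ : Fin (k + 1) ↦ P × G) F).symm
    have hcurry (φ : G → P × G →L[ℝ] (P × G) [×k]→L[ℝ] F) : ∫ t, e (φ t) ∂μ = e (∫ t, φ t ∂μ) :=
      integral_linearIsometryEquiv_comp e φ
    rw [iteratedFDeriv_succ_eq_comp_left, Function.comp_apply, hev.fderiv_eq, hderiv.fderiv]
    simp only [iteratedFDeriv_succ_eq_comp_left, Function.comp_apply, convolution,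
      ContinuousLinearMap.lsmul_apply, ← map_smul]
    exact (hcurry _).symm

theorem exists_norm_iteratedFDeriv_convolution_le [IsFiniteMeasureOnCompacts μ]
    [μ.IsAddLeftInvariant] [μ.IsNegInvariant] {g : P → G → F} {s T : Set P} {K : Set G}
    (hs : IsOpen s) (hT : IsCompact T) (hTs : T ⊆ s) (hK : IsCompact K)
    (hgs : ∀ p x, p ∈ s → x ∉ K → g p x = 0) (hg : ContDiffOn ℝ ∞ ↿g (s ×ˢ univ)) (k : ℕ) :
    ∃ C, ∀ f : G → ℝ, LocallyIntegrable f μ → (∀ x, ‖f x‖ ≤ 1) → ∀ p ∈ T, ∀ x,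
      ‖iteratedFDeriv ℝ k (fun q : P × G ↦ (f ⋆[lsmul ℝ ℝ, μ] g q.1) q.2) (p, x)‖ ≤ C := by
  have hopen : IsOpen (s ×ˢ (univ : Set G)) := hs.prod isOpen_univ
  have hcont : ContinuousOn (iteratedFDeriv ℝ k ↿g) (s ×ˢ univ) :=
    (hg.continuousOn_iteratedFDerivWithin (mod_cast le_top) hopen.uniqueDiffOn).congr
      fun q hq ↦ (iteratedFDerivWithin_of_isOpen k hopen hq).symm
  obtain ⟨C, hC⟩ := (hT.prod hK).exists_bound_of_continuousOn
    (hcont.mono (prod_mono hTs (subset_univ K)))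
  refine ⟨C * μ.real K, fun f hf hf1 p hp x ↦ ?_⟩
  rw [iteratedFDeriv_convolution_right_with_param hs hK hgs hf hg k (hTs hp)]
  exact norm_convolution_le hK hf1 (fun y hy ↦ hC (p, y) ⟨hp, hy⟩)
    (fun y hy ↦ iteratedFDeriv_eq_zero_of_forall_notMem hs hK.isClosed hgs k (hTs hp) hy) x

end Convolution

section Mollification

variable {E F : Type*} [NormedAddCommGroup E] [NormedSpace ℝ E] [NormedAddCommGroup F]
  [NormedSpace ℝ F]

/-- The dilate `ρ_r(v) = r⁻ⁿ ρ(v / r)` of a profile `ρ` on an `n`-dimensional space. -/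
def dilate (ρ : E → F) (r : ℝ) (v : E) : F := (r ^ finrank ℝ E)⁻¹ • ρ (r⁻¹ • v)

/-- The mollification `x ↦ ∫ f(x - r u) ρ(u) du` of `f` at scale `r`. In contrast with `f ⋆ ρ_r`,
this form makes sense at `r = 0` and is visibly equivariant under dilations. -/
def mollify [MeasurableSpace E] (μ : Measure E) (ρ : E → F) (f : E → ℝ) (r : ℝ) (x : E) : F :=
  ∫ u, f (x - r • u) • ρ u ∂μ

theorem mollify_mul_smul [MeasurableSpace E] (μ : Measure E) (ρ : E → F) (f : E → ℝ)
    (r t : ℝ) (x : E) : mollify μ ρ f (r * t) (r • x) = mollify μ ρ (fun w ↦ f (r • w)) t x := by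
  simp only [mollify, smul_sub, mul_smul]

theorem mollify_eq_convolution_dilate [MeasurableSpace E] [BorelSpace E] [FiniteDimensional ℝ E]
    (μ : Measure E) [μ.IsAddHaarMeasure] (ρ : E → F) (f : E → ℝ) {r : ℝ} (hr : 0 < r) (x : E) :
    mollify μ ρ f r x = (f ⋆[lsmul ℝ ℝ, μ] dilate ρ r) x := by
  have hcov :=
    Measure.integral_comp_smul_of_nonneg μ (fun v ↦ f (x - v) • ρ (r⁻¹ • v)) r (hR := hr.le)
  simp only [inv_smul_smul₀ hr.ne'] at hcov
  simp only [mollify, hcov, convolution_eq_swap, dilate, ContinuousLinearMap.lsmul_apply,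
    smul_comm (f _), integral_smul]

theorem mollify_norm_eventuallyEq_convolution {P : Type*} [NormedAddCommGroup P] [MeasurableSpace E]
    [BorelSpace E] [FiniteDimensional ℝ E] (μ : Measure E) [μ.IsAddHaarMeasure] (ρ : E → F)
    (f : E → ℝ) {q : P × E} (hq : q.1 ≠ 0) :
    (fun q : P × E ↦ mollify μ ρ f ‖q.1‖ q.2) =ᶠ[𝓝 q]
      fun q ↦ (f ⋆[lsmul ℝ ℝ, μ] dilate ρ ‖q.1‖) q.2 := by
  filter_upwards [(isOpen_ne.preimage continuous_fst).mem_nhds hq] with q' hq'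
  exact mollify_eq_convolution_dilate μ ρ f (norm_pos_iff.2 hq') q'.2

theorem dilate_norm_eq_zero_of_notMem_smul_tsupport {P : Type*} [NormedAddCommGroup P] {ρ : E → F}
    {b : ℝ} {p : P} (hp : p ∈ ball 0 b \ {0}) {v : E} (hv : v ∉ Icc 0 b • tsupport ρ) :
    dilate ρ ‖p‖ v = 0 := by
  have hp0 : ‖p‖ ≠ 0 := norm_ne_zero_iff.2 hp.2
  have hρ : ρ (‖p‖⁻¹ • v) = 0 := by
    by_contra hne
    exact hv ⟨‖p‖, ⟨norm_nonneg p, (mem_ball_zero_iff.1 hp.1).le⟩, ‖p‖⁻¹ • v,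
      subset_tsupport ρ hne, smul_inv_smul₀ hp0 v⟩
  rw [dilate, hρ, smul_zero]

theorem contDiffOn_dilate_norm {P : Type*} [NormedAddCommGroup P] [InnerProductSpace ℝ P]
    {ρ : E → F} (hρ : ContDiff ℝ ∞ ρ) :
    ContDiffOn ℝ ∞ ↿(fun p : P ↦ dilate ρ ‖p‖) ({0}ᶜ ×ˢ univ) := by
  have hnorm : ContDiffOn ℝ ∞ (fun q : P × E ↦ ‖q.1‖) ({0}ᶜ ×ˢ univ) :=
    contDiff_fst.contDiffOn.norm ℝ fun q hq ↦ hq.1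
  have hne : ∀ q ∈ ({0}ᶜ : Set P) ×ˢ (univ : Set E), ‖q.1‖ ≠ 0 := fun q hq ↦ norm_ne_zero_iff.2 hq.1
  exact ((hnorm.pow _).inv fun q hq ↦ pow_ne_zero _ (hne q hq)).smul
    (hρ.comp_contDiffOn ((hnorm.inv hne).smul contDiffOn_snd))

end Mollification

section ScaledMollification

variable {P E F : Type*} [NormedAddCommGroup P] [InnerProductSpace ℝ P] [NormedAddCommGroup E]
  [NormedSpace ℝ E] [FiniteDimensional ℝ E] [MeasurableSpace E] [BorelSpace E]
  [NormedAddCommGroup F] [NormedSpace ℝ F] {μ : Measure E} [μ.IsAddHaarMeasure] {ρ : E → F}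

theorem contDiffAt_mollify_norm (hρ : ContDiff ℝ ∞ ρ) (hρc : HasCompactSupport ρ) {f : E → ℝ}
    (hf : LocallyIntegrable f μ) {q : P × E} (hq : q.1 ≠ 0) :
    ContDiffAt ℝ ∞ (fun q : P × E ↦ mollify μ ρ f ‖q.1‖ q.2) q := by
  set s : Set P := ball 0 (‖q.1‖ + 1) \ {0}
  have hs : IsOpen s := isOpen_ball.sdiff isClosed_singleton
  have hconv : ContDiffOn ℝ ∞ (fun q : P × E ↦ (f ⋆[lsmul ℝ ℝ, μ] dilate ρ ‖q.1‖) q.2)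
      (s ×ˢ univ) :=
    contDiffOn_convolution_right_with_param (lsmul ℝ ℝ) hs (isCompact_Icc.smul_set hρc)
      (fun p v hp hv ↦ dilate_norm_eq_zero_of_notMem_smul_tsupport hp hv) hf
      ((contDiffOn_dilate_norm hρ).mono (prod_mono_left fun p hp ↦ hp.2))
  exact (hconv.contDiffAt ((hs.prod isOpen_univ).mem_nhds
    ⟨⟨by simp, hq⟩, mem_univ _⟩)).congr_of_eventuallyEq
      (mollify_norm_eventuallyEq_convolution μ ρ f hq)

theorem exists_norm_iteratedFDeriv_mollify_le_of_norm_eq_one [FiniteDimensional ℝ P]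
    (hρ : ContDiff ℝ ∞ ρ) (hρc : HasCompactSupport ρ) (k : ℕ) :
    ∃ C, ∀ f : E → ℝ, Measurable f → (∀ x, ‖f x‖ ≤ 1) → ∀ q : P × E, ‖q.1‖ = 1 →
      ‖iteratedFDeriv ℝ k (fun q : P × E ↦ mollify μ ρ f ‖q.1‖ q.2) q‖ ≤ C := by
  set s : Set P := ball 0 2 \ {0}
  have hs : IsOpen s := isOpen_ball.sdiff isClosed_singleton
  have hsphere : sphere (0 : P) 1 ⊆ s := fun p hp ↦ by
    have hp1 : ‖p‖ = 1 := mem_sphere_zero_iff_norm.1 hp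
    exact ⟨by simp [hp1], norm_ne_zero_iff.1 (by simp [hp1])⟩
  have := FiniteDimensional.proper ℝ P
  obtain ⟨C, hC⟩ := exists_norm_iteratedFDeriv_convolution_le (μ := μ) hs (isCompact_sphere 0 1)
    hsphere (isCompact_Icc.smul_set hρc)
    (fun p v hp hv ↦ dilate_norm_eq_zero_of_notMem_smul_tsupport hp hv)
    ((contDiffOn_dilate_norm hρ).mono (prod_mono_left fun p hp ↦ hp.2)) k
  refine ⟨C, fun f hf hf1 q hq ↦ ?_⟩
  have hq0 : q.1 ≠ 0 := norm_ne_zero_iff.1 (by simp [hq])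
  rw [((mollify_norm_eventuallyEq_convolution μ ρ f hq0).iteratedFDeriv ℝ k).eq_of_nhds]
  exact hC f (locallyIntegrable_of_norm_le_one hf hf1) hf1 q.1 (mem_sphere_zero_iff_norm.2 hq) q.2

theorem exists_norm_iteratedFDeriv_mollify_norm_le [FiniteDimensional ℝ P] (hρ : ContDiff ℝ ∞ ρ)
    (hρc : HasCompactSupport ρ) (k : ℕ) :
    ∃ C, ∀ f : E → ℝ, Measurable f → (∀ x, ‖f x‖ ≤ 1) → ∀ q : P × E, q.1 ≠ 0 →
      ‖iteratedFDeriv ℝ k (fun q : P × E ↦ mollify μ ρ f ‖q.1‖ q.2) q‖ ≤ C * ‖q.1‖⁻¹ ^ k := by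
  obtain ⟨C, hC⟩ := exists_norm_iteratedFDeriv_mollify_le_of_norm_eq_one (P := P) (μ := μ) hρ hρc k
  refine ⟨C, fun f hf hf1 q hq ↦ ?_⟩
  set r := ‖q.1‖
  have hr : 0 < r := norm_pos_iff.2 hq
  set A : P × E →L[ℝ] P × E := r⁻¹ • ContinuousLinearMap.id ℝ (P × E)
  have hA : ‖A‖ ≤ r⁻¹ := A.opNorm_le_bound (by positivity) fun v ↦ by
    simp [A, norm_smul, abs_of_pos hr]
  have hAq : ‖(A q).1‖ = 1 := by simp [A, r, norm_smul, hq]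
  set f' : E → ℝ := fun w ↦ f (r • w)
  have hf' : Measurable f' := by fun_prop
  have hdilate (q : P × E) : mollify μ ρ f ‖q.1‖ q.2 = mollify μ ρ f' ‖(A q).1‖ (A q).2 := by
    simpa [A, norm_smul, abs_of_pos hr, hr.ne'] using
      mollify_mul_smul μ ρ f r ‖(A q).1‖ (A q).2
  have hsmooth := contDiffAt_mollify_norm (μ := μ) hρ hρc
    (locallyIntegrable_of_norm_le_one hf' fun w ↦ hf1 _)
    (norm_ne_zero_iff.1 (hAq ▸ one_ne_zero))
  have hbound := hC f' hf' (fun w ↦ hf1 _) (A q) hAq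
  have hC0 : 0 ≤ C := (norm_nonneg _).trans hbound
  simp only [hdilate]
  refine (norm_iteratedFDeriv_comp_clm_le A (hsmooth.of_le (mod_cast le_top))).trans ?_
  gcongr

theorem exists_norm_iteratedFDeriv_mollify_norm_affine_le [FiniteDimensional ℝ P]
    (hρ : ContDiff ℝ ∞ ρ) (hρc : HasCompactSupport ρ) (c : P) (L : E →L[ℝ] P)
    (hne : ∀ x, c + L x ≠ 0) (k : ℕ) :
    ∃ C, ∀ f : E → ℝ, Measurable f → (∀ x, ‖f x‖ ≤ 1) → ∀ x,
      ‖iteratedFDeriv ℝ k (fun x ↦ mollify μ ρ f ‖c + L x‖ x) x‖ ≤ C * ‖c + L x‖⁻¹ ^ k := by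
  obtain ⟨C, hC⟩ := exists_norm_iteratedFDeriv_mollify_norm_le (P := P) (μ := μ) hρ hρc k
  set A : E →L[ℝ] P × E := L.prod (.id ℝ E)
  have hA (x : E) : (c, 0) + A x = (c + L x, x) := by simp [A]
  refine ⟨C * ‖A‖ ^ k, fun f hf hf1 x ↦ ?_⟩
  have hq : ((c, 0) + A x).1 ≠ 0 := by rw [hA]; exact hne x
  have hsmooth := contDiffAt_mollify_norm (μ := μ) hρ hρc
    (locallyIntegrable_of_norm_le_one hf hf1) hq
  have hchain := norm_iteratedFDeriv_comp_const_add_clm_le (k := k) (c, 0) A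
    (hsmooth.of_le (mod_cast le_top))
  have hbound := hC f hf hf1 _ hq
  simp only [hA] at hchain hbound
  calc ‖iteratedFDeriv ℝ k (fun x ↦ mollify μ ρ f ‖c + L x‖ x) x‖
    _ ≤ ‖iteratedFDeriv ℝ k (fun q : P × E ↦ mollify μ ρ f ‖q.1‖ q.2) (c + L x, x)‖ * ‖A‖ ^ k :=
        hchain
    _ ≤ C * ‖c + L x‖⁻¹ ^ k * ‖A‖ ^ k := by gcongr
    _ = C * ‖A‖ ^ k * ‖c + L x‖⁻¹ ^ k := by ring

end ScaledMollification

theorem norm_toLp_one_prodMk {E : Type*} [NormedAddCommGroup E] (x : E) :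
    ‖WithLp.toLp 2 ((1 : ℝ), x)‖ = √(1 + ‖x‖ ^ 2) := by
  simp [WithLp.prod_norm_eq_of_L2]

theorem stmt8_general {E F : Type*} [NormedAddCommGroup E] [InnerProductSpace ℝ E]
    [FiniteDimensional ℝ E] [MeasurableSpace E] [BorelSpace E] [NormedAddCommGroup F]
    [NormedSpace ℝ F] (μ : Measure E) [μ.IsAddHaarMeasure] {ρ : E → F} (hρ : ContDiff ℝ ∞ ρ)
    (hρc : HasCompactSupport ρ) {ε : ℝ} (hε : 0 < ε) (k : ℕ) :
    ∃ C : ℝ, ∀ f : E → ℝ, Measurable f → (∀ x, ‖f x‖ ≤ 1) → ∀ x,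
      ‖iteratedFDeriv ℝ k (fun x ↦ mollify μ ρ f (√(1 + ‖x‖ ^ 2) * ε) x) x‖ ≤
        C * (√(1 + ‖x‖ ^ 2))⁻¹ ^ k := by
  set c : WithLp 2 (ℝ × E) := ε • WithLp.toLp 2 (1, 0)
  set L : E →L[ℝ] WithLp 2 (ℝ × E) :=
    ε • (WithLp.prodContinuousLinearEquiv 2 ℝ ℝ E).symm ∘L .inr ℝ ℝ E
  have hnorm (x : E) : ‖c + L x‖ = √(1 + ‖x‖ ^ 2) * ε := by
    have hcL : c + L x = ε • WithLp.toLp 2 (1, x) := by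
      simp [c, L, ← smul_add, ← WithLp.toLp_add]
    rw [hcL, norm_smul, norm_toLp_one_prodMk, Real.norm_of_nonneg hε.le, mul_comm]
  have hne (x : E) : c + L x ≠ 0 := norm_ne_zero_iff.1 (by rw [hnorm]; positivity)
  obtain ⟨C, hC⟩ := exists_norm_iteratedFDeriv_mollify_norm_affine_le (μ := μ) hρ hρc c L hne k
  simp only [hnorm] at hC
  refine ⟨C * ε⁻¹ ^ k, fun f hf hf1 x ↦ (hC f hf hf1 x).trans_eq ?_⟩
  rw [mul_inv, mul_pow]
  ring

/-- each derivative of order `k` of the rescaled mollification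
`χ̃(x) = ∫ 𝟙_S(x - ⟨x⟩ε u) ρ(u) du` decays like `⟨x⟩^{-k}`: there is a constant
`C(ε, k)` with `|D^k χ̃(x)| ≤ C(ε,k) ⟨x⟩^{-k}` for all `x`. -/
theorem stmt8 (S : Set E3) (hS : MeasurableSet S) (ε : ℝ)
    (hε : ε ∈ Set.Ioo (0 : ℝ) (1 / 2))
    (ρ : E3 → ℝ) (hρsmooth : ContDiff ℝ (⊤ : ℕ∞) ρ) (hρpos : ∀ u, 0 ≤ ρ u)
    (hρsupp : Function.support ρ ⊆ Metric.ball (0 : E3) ε)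
    (hρint : ∫ u : E3, ρ u = 1) (k : ℕ) :
    ∃ C : ℝ, ∀ x, ‖iteratedFDeriv ℝ k (wCutoff S ε ρ) x‖ ≤ C * (jap x)⁻¹ ^ k := by
  have hρc : HasCompactSupport ρ :=
    .of_support_subset_isCompact (isCompact_closedBall 0 ε) (hρsupp.trans ball_subset_closedBall)
  obtain ⟨C, hC⟩ := stmt8_general volume hρsmooth hρc hε.1 k
  exact ⟨C, hC (S.indicator fun _ ↦ 1) (measurable_const.indicator hS)
    fun x ↦ (norm_indicator_le_norm_self _ x).trans (by simp)⟩
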